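/- Let (H,d) be a Hadamard space and f : H → (−∞,∞] a proper convex lower semicontinuous function that attains its minimum on H. Let x₀ ∈ H be arbitrary and let (λ_n) be a sequence of positive reals with Σ_{n=1}^∞ λ_n = ∞. Then the proximal point algorithm sequence defined by x_n = argmin_{y∈H} [f(y) + d(y,x_{n−1})²/(2λ_n)] weakly converges to a minimizer of f. -/

import Mathlib

open Filter Topology
open scoped Classical

/-- `γ`, restricted to `[0,1]`, is an affinely parametrized geodesic. -/
def IsGeodesic {H : Type*} [MetricSpace H] (γ : ℝ → H) : Prop :=
  ∀ s ∈ Set.Icc (0:ℝ) 1, ∀ t ∈ Set.Icc (0:ℝ) 1,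
    dist (γ s) (γ t) = |s - t| * dist (γ 0) (γ 1)

/-- A Hadamard space: a complete geodesic metric space satisfying the CAT(0) inequality. -/
structure HadamardSpace (H : Type*) [MetricSpace H] [CompleteSpace H] : Prop where
  geodesic : ∀ x y : H, ∃ γ : ℝ → H, IsGeodesic γ ∧ γ 0 = x ∧ γ 1 = y
  cat0 : ∀ (x : H) (γ : ℝ → H), IsGeodesic γ → ∀ t ∈ Set.Icc (0:ℝ) 1,
      dist x (γ t) ^ 2 ≤ (1 - t) * dist x (γ 0) ^ 2 + t * dist x (γ 1) ^ 2
        - t * (1 - t) * dist (γ 0) (γ 1) ^ 2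

/-- A set is (geodesically) convex if it contains every geodesic segment between its points. -/
def GeodesicConvex {H : Type*} [MetricSpace H] (C : Set H) : Prop :=
  ∀ γ : ℝ → H, IsGeodesic γ → γ 0 ∈ C → γ 1 ∈ C → ∀ t ∈ Set.Icc (0:ℝ) 1, γ t ∈ C

/-- A function `f : H → (−∞,∞]` is convex if it is convex along every geodesic. -/
def ConvexFun {H : Type*} [MetricSpace H] (f : H → EReal) : Prop :=
  ∀ γ : ℝ → H, IsGeodesic γ → ∀ t ∈ Set.Icc (0:ℝ) 1,
    f (γ t) ≤ ((1 - t : ℝ) : EReal) * f (γ 0) + ((t : ℝ) : EReal) * f (γ 1)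

/-- `f` is strongly convex with parameter `β > 0`. -/
def StronglyConvexWith {H : Type*} [MetricSpace H] (β : ℝ) (f : H → EReal) : Prop :=
  ∀ γ : ℝ → H, IsGeodesic γ → ∀ t ∈ Set.Icc (0:ℝ) 1,
    f (γ t) ≤ ((1 - t : ℝ) : EReal) * f (γ 0) + ((t : ℝ) : EReal) * f (γ 1)
      - ((β * (t * (1 - t)) * dist (γ 0) (γ 1) ^ 2 : ℝ) : EReal)

/-- `f : H → (−∞,∞]` is proper (not identically `∞`, never `−∞`), convex and lsc. -/
def ProperConvexLsc {H : Type*} [MetricSpace H] (f : H → EReal) : Prop :=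
  (∃ x, f x ≠ ⊤) ∧ (∀ x, f x ≠ ⊥) ∧ ConvexFun f ∧ LowerSemicontinuous f

/-- `c` is an asymptotic center of the (bounded) sequence `x`:
it minimizes `y ↦ limsup_n d(y, x_n)²`. -/
def IsAsymptoticCenter {H : Type*} [MetricSpace H] (x : ℕ → H) (c : H) : Prop :=
  ∀ y : H, limsup (fun n => dist c (x n) ^ 2) atTop ≤ limsup (fun n => dist y (x n) ^ 2) atTop

/-- `x` weakly converges to `c` if `c` is the asymptotic center of every subsequence of `x`. -/
def WeakConvSeq {H : Type*} [MetricSpace H] (x : ℕ → H) (c : H) : Prop :=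
  ∀ φ : ℕ → ℕ, StrictMono φ → IsAsymptoticCenter (x ∘ φ) c

/-- Mosco convergence of `fn` to `f`. -/
def MoscoConv {H : Type*} [MetricSpace H] (fn : ℕ → H → EReal) (f : H → EReal) : Prop :=
  (∀ (x : H) (xs : ℕ → H), Bornology.IsBounded (Set.range xs) → WeakConvSeq xs x →
      f x ≤ liminf (fun n => fn n (xs n)) atTop) ∧
  (∀ x : H, ∃ ys : ℕ → H, Tendsto ys atTop (𝓝 x) ∧
      Tendsto (fun n => fn n (ys n)) atTop (𝓝 (f x)))

/-- `p` is the resolvent `J_λ x` of `f` at `x`: it minimizes `y ↦ f(y) + d(x,y)²/(2λ)`. -/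
def IsResolventPt {H : Type*} [MetricSpace H] (f : H → EReal) (lam : ℝ) (x p : H) : Prop :=
  ∀ y : H, f p + ((dist x p ^ 2 / (2 * lam) : ℝ) : EReal)
    ≤ f y + ((dist x y ^ 2 / (2 * lam) : ℝ) : EReal)

/-- The Moreau–Yosida envelope `f_λ(x) = inf_y [f(y) + d(x,y)²/(2λ)]`. -/
noncomputable def MoreauEnv {H : Type*} [MetricSpace H] (f : H → EReal) (lam : ℝ) (x : H) :
    EReal :=
  ⨅ y : H, f y + ((dist x y ^ 2 / (2 * lam) : ℝ) : EReal)

/-- `p` is the metric projection of `x` onto `C`. -/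
def IsProjPt {H : Type*} [MetricSpace H] (C : Set H) (x p : H) : Prop :=
  p ∈ C ∧ ∀ c ∈ C, dist x p ≤ dist x c

/-- The indicator function of a set, with values in `(−∞,∞]`. -/
noncomputable def indicatorE {H : Type*} (C : Set H) : H → EReal :=
  fun x => if x ∈ C then (0 : EReal) else ⊤

/-- `y = S_t x` is the gradient-flow semigroup value:
the limit of the iterated resolvents `(J_{t/n})^{(n)} x`. -/
def IsGradientFlowPt {H : Type*} [MetricSpace H] (J : ℝ → H → H) (t : ℝ) (x y : H) : Prop :=
  Tendsto (fun n : ℕ => (J (t / (n : ℝ)))^[n] x) atTop (𝓝 y)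

lemma nonpos_of_forall_le_mul {a b : ℝ} (h : ∀ t : ℝ, 0 < t → t < 1 → a ≤ t * b) : a ≤ 0 := by
  have hlim : Tendsto (fun t : ℝ => t * b) (𝓝[>] 0) (𝓝 0) := by
    have hc : Continuous fun t : ℝ => t * b := by fun_prop
    simpa using (hc.tendsto 0).mono_left nhdsWithin_le_nhds
  refine ge_of_tendsto hlim ?_
  filter_upwards [Ioo_mem_nhdsGT (zero_lt_one' ℝ)] with t ht
  exact h t ht.1 ht.2

section Hadamard

variable {H : Type*} [MetricSpace H]

/-- The variational inequality characterizing the resolvent. -/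
lemma IsResolventPt.variational_inequality [CompleteSpace H] (hH : HadamardSpace H)
    {f : H → EReal} (hconv : ConvexFun f) {lam : ℝ} (hlam : 0 < lam) {x p y : H}
    (hp : IsResolventPt f lam x p) {a b : ℝ} (ha : f p = a) (hb : f y = b) :
    2 * lam * (a - b) ≤ dist x y ^ 2 - dist x p ^ 2 - dist p y ^ 2 := by
  obtain ⟨γ, hγ, h0, h1⟩ := hH.geodesic p y
  suffices h : 2 * lam * (a - b) - (dist x y ^ 2 - dist x p ^ 2 - dist p y ^ 2) ≤ 0 by linarith
  refine nonpos_of_forall_le_mul (b := dist p y ^ 2) fun t ht0 ht1 => ?_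
  have ht : t ∈ Set.Icc (0 : ℝ) 1 := ⟨ht0.le, ht1.le⟩
  have hcat := hH.cat0 x γ hγ t ht
  have hfγ := hconv γ hγ t ht
  have hmin := (hp (γ t)).trans (add_le_add_left hfγ _)
  rw [h0, h1, ha, hb] at hmin
  rw [h0, h1] at hcat
  norm_cast at hmin
  have hmul : 2 * lam * a + dist x p ^ 2 ≤
      2 * lam * ((1 - t) * a + t * b) + dist x (γ t) ^ 2 := by
    have := mul_le_mul_of_nonneg_left hmin (by positivity : 0 ≤ 2 * lam)
    rw [mul_add, mul_add, mul_div_cancel₀ _ (by positivity), mul_div_cancel₀ _ (by positivity)]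
      at this
    exact this
  refine le_of_mul_le_mul_left ?_ ht0
  nlinarith

/-- A nonnegative lower semicontinuous function that is uniformly convex along midpoints attains
its infimum on every nonempty closed convex set. -/
lemma exists_isMinOn_of_midpoint_strong [CompleteSpace H] (hH : HadamardSpace H)
    {g : H → ℝ} (hg0 : ∀ y, 0 ≤ g y) (hlsc : LowerSemicontinuous g)
    (hmid : ∀ γ : ℝ → H, IsGeodesic γ →
      g (γ (1 / 2)) ≤ (g (γ 0) + g (γ 1)) / 2 - dist (γ 0) (γ 1) ^ 2 / 4)
    {C : Set H} (hC : IsClosed C) (hconv : GeodesicConvex C) (hne : C.Nonempty) :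
    ∃ c ∈ C, ∀ y ∈ C, g c ≤ g y := by
  have hbdd : BddBelow (g '' C) := ⟨0, by rintro _ ⟨y, -, rfl⟩; exact hg0 y⟩
  have hle : ∀ y ∈ C, sInf (g '' C) ≤ g y := fun y hy => csInf_le hbdd ⟨y, hy, rfl⟩
  have hex : ∀ k : ℕ, ∃ y ∈ C, g y < sInf (g '' C) + 1 / ((k : ℝ) + 1) := fun k => by
    obtain ⟨_, ⟨y, hy, rfl⟩, h⟩ := exists_lt_of_csInf_lt (hne.image g)
      (lt_add_of_pos_right (sInf (g '' C)) (Nat.one_div_pos_of_nat (n := k)))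
    exact ⟨y, hy, h⟩
  choose u huC hu using hex
  have hcauchy : CauchySeq u := by
    refine Metric.cauchySeq_iff'.2 fun ε hε => ?_
    obtain ⟨N, hN⟩ := exists_nat_one_div_lt (by positivity : 0 < ε ^ 2 / 4)
    refine ⟨N, fun n hn => ?_⟩
    obtain ⟨γ, hγ, h0, h1⟩ := hH.geodesic (u n) (u N)
    have h := hmid γ hγ
    have hγC := hle _ (hconv γ hγ (h0 ▸ huC n) (h1 ▸ huC N) (1 / 2) (by norm_num))
    rw [h0, h1] at h
    have hn' : 1 / ((n : ℝ) + 1) ≤ 1 / ((N : ℝ) + 1) := Nat.one_div_le_one_div hn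
    refine lt_of_pow_lt_pow_left₀ 2 hε.le ?_
    linarith [hu n, hu N]
  obtain ⟨c, hc⟩ := cauchySeq_tendsto_of_complete hcauchy
  refine ⟨c, hC.mem_of_tendsto hc (Eventually.of_forall huC), fun y hy => ?_⟩
  refine le_trans ?_ (hle y hy)
  by_contra! hlt
  obtain ⟨a, ha, hac⟩ := exists_between hlt
  obtain ⟨N, hN⟩ := exists_nat_one_div_lt (sub_pos.2 ha)
  obtain ⟨n, hn, hNn⟩ := ((hc.eventually (hlsc c a hac)).and (eventually_ge_atTop N)).exists
  have hn' : 1 / ((n : ℝ) + 1) ≤ 1 / ((N : ℝ) + 1) := Nat.one_div_le_one_div hNn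
  linarith [hu n]

/-- Existence of the metric projection `p` of `c` onto a closed convex set, together with its
obtuse-angle inequality. -/
lemma exists_projection [CompleteSpace H] (hH : HadamardSpace H) {C : Set H} (hC : IsClosed C)
    (hconv : GeodesicConvex C) (hne : C.Nonempty) (c : H) :
    ∃ p ∈ C, ∀ z ∈ C, dist p z ^ 2 + dist c p ^ 2 ≤ dist c z ^ 2 := by
  obtain ⟨p, hp, hmin⟩ := exists_isMinOn_of_midpoint_strong hH (g := fun y => dist c y ^ 2)
    (fun y => by positivity) (Continuous.lowerSemicontinuous (by fun_prop))
    (fun γ hγ => by linarith [hH.cat0 c γ hγ (1 / 2) (by norm_num)]) hC hconv hne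
  refine ⟨p, hp, fun z hz => ?_⟩
  obtain ⟨γ, hγ, h0, h1⟩ := hH.geodesic p z
  suffices h : dist p z ^ 2 + dist c p ^ 2 - dist c z ^ 2 ≤ 0 by linarith
  refine nonpos_of_forall_le_mul (b := dist p z ^ 2) fun t ht0 ht1 => ?_
  have ht : t ∈ Set.Icc (0 : ℝ) 1 := ⟨ht0.le, ht1.le⟩
  have hcat := hH.cat0 c γ hγ t ht
  have hγC := hmin _ (hconv γ hγ (h0 ▸ hp) (h1 ▸ hz) t ht)
  rw [h0, h1] at hcat
  refine le_of_mul_le_mul_left ?_ ht0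
  nlinarith

lemma exists_dist_le_of_isBounded_range {u : ℕ → H} (hu : Bornology.IsBounded (Set.range u))
    (y : H) : ∃ K : ℝ, ∀ n, dist y (u n) ≤ K := by
  obtain ⟨K, hK⟩ := hu.subset_closedBall y
  exact ⟨K, fun n => by simpa [dist_comm] using hK ⟨n, rfl⟩⟩

lemma isBoundedUnder_dist_sq {u : ℕ → H} (hu : Bornology.IsBounded (Set.range u)) (y : H) :
    IsBoundedUnder (· ≤ ·) atTop fun n => dist y (u n) ^ 2 := by
  obtain ⟨K, hK⟩ := exists_dist_le_of_isBounded_range hu y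
  exact isBoundedUnder_of ⟨K ^ 2, fun n => pow_le_pow_left₀ dist_nonneg (hK n) 2⟩

lemma limsup_dist_sq_le {u : ℕ → H} {y : H} {b : ℝ} (h : ∀ᶠ n in atTop, dist y (u n) ^ 2 ≤ b) :
    limsup (fun n => dist y (u n) ^ 2) atTop ≤ b :=
  limsup_le_of_le (isCoboundedUnder_le_of_le atTop fun _ => sq_nonneg _) h

lemma eventually_dist_sq_lt {u : ℕ → H} (hu : Bornology.IsBounded (Set.range u)) (y : H) {b : ℝ}
    (h : limsup (fun n => dist y (u n) ^ 2) atTop < b) : ∀ᶠ n in atTop, dist y (u n) ^ 2 < b :=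
  eventually_lt_of_limsup_lt h (isBoundedUnder_dist_sq hu y)

lemma limsup_dist_sq_nonneg {u : ℕ → H} (hu : Bornology.IsBounded (Set.range u)) (y : H) :
    0 ≤ limsup (fun n => dist y (u n) ^ 2) atTop :=
  le_limsup_of_frequently_le (Frequently.of_forall fun _ => sq_nonneg _)
    (isBoundedUnder_dist_sq hu y)

lemma lowerSemicontinuous_limsup_dist_sq {u : ℕ → H} (hu : Bornology.IsBounded (Set.range u)) :
    LowerSemicontinuous fun y => limsup (fun n => dist y (u n) ^ 2) atTop := by
  intro c a ha
  obtain ⟨K, hK⟩ := exists_dist_le_of_isBounded_range hu c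
  have hcont : Continuous fun y => dist c y * (2 * K + dist c y) := by fun_prop
  have hlim : ∀ᶠ y in 𝓝 c, dist c y * (2 * K + dist c y) <
      limsup (fun n => dist c (u n) ^ 2) atTop - a :=
    (hcont.tendsto c).eventually_lt_const (by simpa using ha)
  filter_upwards [hlim] with y hy
  by_contra! hya
  obtain ⟨b, hb, hb'⟩ := exists_between (lt_sub_comm.1 hy)
  refine absurd (limsup_dist_sq_le (u := u) (y := c)
    (b := b + dist c y * (2 * K + dist c y)) ?_) (by linarith)
  filter_upwards [eventually_dist_sq_lt hu y (hya.trans_lt hb)] with n hn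
  have h1 : dist c (u n) ≤ dist c y + dist y (u n) := dist_triangle _ _ _
  have h2 : dist y (u n) ≤ dist c y + dist c (u n) := dist_triangle_left _ _ _
  have h3 := hK n
  have h4 : 0 ≤ dist c y := dist_nonneg
  have h5 : 0 ≤ dist c (u n) := dist_nonneg
  have h6 : 0 ≤ dist y (u n) := dist_nonneg
  nlinarith

lemma limsup_dist_sq_midpoint_le [CompleteSpace H] (hH : HadamardSpace H) {u : ℕ → H}
    (hu : Bornology.IsBounded (Set.range u)) {γ : ℝ → H} (hγ : IsGeodesic γ) :
    limsup (fun n => dist (γ (1 / 2)) (u n) ^ 2) atTop ≤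
      (limsup (fun n => dist (γ 0) (u n) ^ 2) atTop +
        limsup (fun n => dist (γ 1) (u n) ^ 2) atTop) / 2 - dist (γ 0) (γ 1) ^ 2 / 4 := by
  refine le_of_forall_pos_le_add fun ε hε => limsup_dist_sq_le ?_
  filter_upwards [eventually_dist_sq_lt hu (γ 0) (lt_add_of_pos_right _ hε),
    eventually_dist_sq_lt hu (γ 1) (lt_add_of_pos_right _ hε)] with n h0 h1
  have h := hH.cat0 (u n) γ hγ (1 / 2) (by norm_num)
  simp only [dist_comm (u n)] at h
  linarith

/-- Every bounded sequence has an asymptotic center. -/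
lemma exists_isAsymptoticCenter [CompleteSpace H] (hH : HadamardSpace H) {u : ℕ → H}
    (hu : Bornology.IsBounded (Set.range u)) : ∃ c, IsAsymptoticCenter u c := by
  obtain ⟨c, -, hc⟩ := exists_isMinOn_of_midpoint_strong hH (limsup_dist_sq_nonneg hu)
    (lowerSemicontinuous_limsup_dist_sq hu) (fun γ hγ => limsup_dist_sq_midpoint_le hH hu hγ)
    isClosed_univ (fun _ _ _ _ _ _ => Set.mem_univ _) ⟨u 0, Set.mem_univ _⟩
  exact ⟨c, fun y => hc y (Set.mem_univ y)⟩

/-- A closed convex set eventually containing a bounded sequence contains its asymptotic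
centers. -/
lemma IsAsymptoticCenter.mem [CompleteSpace H] (hH : HadamardSpace H) {u : ℕ → H}
    (hu : Bornology.IsBounded (Set.range u)) {c : H} (hc : IsAsymptoticCenter u c)
    {C : Set H} (hC : IsClosed C) (hconv : GeodesicConvex C) (huC : ∀ᶠ n in atTop, u n ∈ C) :
    c ∈ C := by
  obtain ⟨n, hn⟩ := huC.exists
  obtain ⟨p, hp, hproj⟩ := exists_projection hH hC hconv ⟨_, hn⟩ c
  have hle : limsup (fun n => dist p (u n) ^ 2) atTop ≤
      limsup (fun n => dist c (u n) ^ 2) atTop - dist c p ^ 2 := by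
    refine le_of_forall_pos_le_add fun ε hε => limsup_dist_sq_le ?_
    filter_upwards [huC, eventually_dist_sq_lt hu c (lt_add_of_pos_right _ hε)] with n h h'
    linarith [hproj _ h]
  have hzero : dist c p ^ 2 = 0 := le_antisymm (by linarith [hc p]) (sq_nonneg _)
  rwa [dist_eq_zero.1 (pow_eq_zero_iff two_ne_zero |>.1 hzero)]

lemma ConvexFun.geodesicConvex_sublevel {f : H → EReal} (hf : ConvexFun f) (a : ℝ) :
    GeodesicConvex {y | f y ≤ a} := by
  intro γ hγ h0 h1 t ht
  calc f (γ t) ≤ ((1 - t : ℝ) : EReal) * f (γ 0) + ((t : ℝ) : EReal) * f (γ 1) := hf γ hγ t ht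
    _ ≤ ((1 - t : ℝ) : EReal) * a + ((t : ℝ) : EReal) * a :=
      add_le_add
        (mul_le_mul_of_nonneg_left h0 (EReal.coe_nonneg.2 (sub_nonneg.2 ht.2)))
        (mul_le_mul_of_nonneg_left h1 (EReal.coe_nonneg.2 ht.1))
    _ = a := by norm_cast; ring

/-- If `f` tends to at most `v` along a bounded sequence, then `f ≤ v` at the asymptotic
centers of that sequence. -/
lemma IsAsymptoticCenter.le_of_eventually_le [CompleteSpace H] (hH : HadamardSpace H)
    {f : H → EReal} (hconv : ConvexFun f) (hlsc : LowerSemicontinuous f) {u : ℕ → H}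
    (hu : Bornology.IsBounded (Set.range u)) {c : H} (hc : IsAsymptoticCenter u c) {v : ℝ}
    (hv : ∀ a : ℝ, v < a → ∀ᶠ n in atTop, f (u n) ≤ a) : f c ≤ v := by
  refine EReal.le_of_forall_lt_iff_le.1 fun a ha => ?_
  exact hc.mem hH hu (hlsc.isClosed_preimage (a : EReal)) (hconv.geodesicConvex_sublevel a)
    (hv a (EReal.coe_lt_coe_iff.1 ha))

/-- A bounded sequence whose distances to each point of `M` are antitone converges weakly to a
point of `M` as soon as `M` contains all asymptotic centers of its subsequences. -/
lemma exists_weakConvSeq_of_antitone_dist [CompleteSpace H] (hH : HadamardSpace H) {x : ℕ → H}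
    (hx : Bornology.IsBounded (Set.range x)) {M : Set H}
    (hanti : ∀ y ∈ M, Antitone fun n => dist y (x n))
    (hM : ∀ φ : ℕ → ℕ, StrictMono φ → ∀ c, IsAsymptoticCenter (x ∘ φ) c → c ∈ M) :
    ∃ m ∈ M, WeakConvSeq x m := by
  have hlim : ∀ y ∈ M, ∀ φ : ℕ → ℕ, StrictMono φ →
      limsup (fun n => dist y ((x ∘ φ) n) ^ 2) atTop =
        limsup (fun n => dist y (x n) ^ 2) atTop := fun y hy φ hφ => by
    have h : Tendsto (fun n => dist y (x n)) atTop (𝓝 (⨅ n, dist y (x n))) :=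
      tendsto_atTop_ciInf (hanti y hy) ⟨0, by rintro _ ⟨n, rfl⟩; exact dist_nonneg⟩
    exact ((h.comp hφ.tendsto_atTop).pow 2).limsup_eq.trans (h.pow 2).limsup_eq.symm
  obtain ⟨m, hm⟩ := exists_isAsymptoticCenter hH hx
  have hmM : m ∈ M := hM id strictMono_id m hm
  refine ⟨m, hmM, fun φ hφ y => ?_⟩
  obtain ⟨c, hc⟩ := exists_isAsymptoticCenter hH (hx.subset (Set.range_comp_subset_range φ x))
  have hcM : c ∈ M := hM φ hφ c hc
  calc limsup (fun n => dist m ((x ∘ φ) n) ^ 2) atTop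
      = limsup (fun n => dist m (x n) ^ 2) atTop := hlim m hmM φ hφ
    _ ≤ limsup (fun n => dist c (x n) ^ 2) atTop := hm c
    _ = limsup (fun n => dist c ((x ∘ φ) n) ^ 2) atTop := (hlim c hcM φ hφ).symm
    _ ≤ limsup (fun n => dist y ((x ∘ φ) n) ^ 2) atTop := hc y

lemma IsResolventPt.le {f : H → EReal} {lam : ℝ} (hlam : 0 < lam) {x p : H}
    (hp : IsResolventPt f lam x p) : f p ≤ f x := by
  have hnonneg : (0 : EReal) ≤ ((dist x p ^ 2 / (2 * lam) : ℝ) : EReal) :=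
    EReal.coe_nonneg.2 (by positivity)
  simpa using (le_add_of_nonneg_right hnonneg).trans (hp x)

lemma IsResolventPt.ne_top {f : H → EReal} {lam : ℝ} {x p y : H}
    (hp : IsResolventPt f lam x p) (hy : f y ≠ ⊤) : f p ≠ ⊤ := by
  intro htop
  have h := hp y
  rw [htop, EReal.top_add_coe, top_le_iff] at h
  exact EReal.add_ne_top hy (EReal.coe_ne_top _) h

end Hadamard

/-- (Weak convergence of the proximal point algorithm.) If a proper convex
lsc function on a Hadamard space attains its minimum, the proximal point algorithm with
positive steps `λ_n` satisfying `∑ λ_n = ∞` weakly converges to a minimizer of `f`. -/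
theorem proximal_point_algorithm_weak_convergence
    {H : Type*} [MetricSpace H] [CompleteSpace H] (hH : HadamardSpace H)
    (f : H → EReal) (hf : ProperConvexLsc f)
    (hmin : ∃ m : H, ∀ y : H, f m ≤ f y)
    (x₀ : H) (lam : ℕ → ℝ) (hpos : ∀ n, 0 < lam n)
    (hdiv : Tendsto (fun N => ∑ n ∈ Finset.range N, lam n) atTop atTop)
    (x : ℕ → H) (hx0 : x 0 = x₀)
    (hx : ∀ n : ℕ, IsResolventPt f (lam n) (x n) (x (n + 1))) :
    ∃ m : H, (∀ y : H, f m ≤ f y) ∧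
      Bornology.IsBounded (Set.range x) ∧ WeakConvSeq x m := by
  obtain ⟨⟨z, hz⟩, hbot, hconv, hlsc⟩ := hf
  obtain ⟨m₀, hm₀⟩ := hmin
  have htop₀ : f m₀ ≠ ⊤ := ne_top_of_le_ne_top hz (hm₀ z)
  obtain ⟨v, hv⟩ : ∃ v : ℝ, f m₀ = v := ⟨_, (EReal.coe_toReal htop₀ (hbot m₀)).symm⟩
  have hreal : ∀ n, ∃ a : ℝ, f (x (n + 1)) = a := fun n =>
    ⟨_, (EReal.coe_toReal ((hx n).ne_top htop₀) (hbot _)).symm⟩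
  choose a ha using hreal
  have hva : ∀ n, v ≤ a n := fun n => by
    have := hm₀ (x (n + 1))
    rwa [hv, ha, EReal.coe_le_coe_iff] at this
  have ha_anti : Antitone a := antitone_nat_of_succ_le fun n => by
    have := (hx (n + 1)).le (hpos _)
    rwa [ha, ha, EReal.coe_le_coe_iff] at this
  have hstep : ∀ y, f y = v → ∀ n, 2 * lam n * (a n - v) ≤
      dist y (x n) ^ 2 - dist y (x (n + 1)) ^ 2 := fun y hy n => by
    have h := (hx n).variational_inequality hH hconv (hpos n) (ha n) hy
    rw [dist_comm (x n) y, dist_comm (x (n + 1)) y] at h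
    linarith [sq_nonneg (dist (x n) (x (n + 1)))]
  have hanti : ∀ y, f y = v → Antitone fun n => dist y (x n) := fun y hy =>
    antitone_nat_of_succ_le fun n => by
      have h0 : 0 ≤ 2 * lam n * (a n - v) :=
        mul_nonneg (by linarith [hpos n]) (sub_nonneg.2 (hva n))
      exact le_of_sq_le_sq (by linarith [hstep y hy n]) dist_nonneg
  have hbdd : Bornology.IsBounded (Set.range x) :=
    (Metric.isBounded_closedBall (x := m₀) (r := dist m₀ (x 0))).subset <| by
      rintro _ ⟨n, rfl⟩
      rw [Metric.mem_closedBall, dist_comm]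
      exact hanti m₀ hv (Nat.zero_le n)
  have hsum : ∀ N, 2 * (∑ n ∈ Finset.range N, lam n) * (a N - v) ≤ dist m₀ (x 0) ^ 2 := by
    intro N
    calc 2 * (∑ n ∈ Finset.range N, lam n) * (a N - v)
        = ∑ n ∈ Finset.range N, 2 * lam n * (a N - v) := by
          rw [Finset.mul_sum, Finset.sum_mul]
      _ ≤ ∑ n ∈ Finset.range N, (dist m₀ (x n) ^ 2 - dist m₀ (x (n + 1)) ^ 2) :=
          Finset.sum_le_sum fun n hn => le_trans
            (mul_le_mul_of_nonneg_left
              (sub_le_sub_right (ha_anti (Finset.mem_range.1 hn).le) v) (by linarith [hpos n]))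
            (hstep m₀ hv n)
      _ = dist m₀ (x 0) ^ 2 - dist m₀ (x N) ^ 2 :=
          Finset.sum_range_sub' (fun n => dist m₀ (x n) ^ 2) N
      _ ≤ dist m₀ (x 0) ^ 2 := sub_le_self _ (sq_nonneg _)
  have hvalue : ∀ b : ℝ, v < b → ∀ᶠ n in atTop, f (x n) ≤ b := fun b hb => by
    rw [← map_add_atTop_eq_nat 1, eventually_map]
    filter_upwards [hdiv.eventually_ge_atTop (dist m₀ (x 0) ^ 2 / (b - v)),
      hdiv.eventually_gt_atTop 0] with N hN hN0
    rw [ha, EReal.coe_le_coe_iff]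
    rw [div_le_iff₀ (sub_pos.2 hb)] at hN
    by_contra! hlt
    nlinarith [hsum N, mul_lt_mul_of_pos_left (sub_lt_sub_right hlt v) hN0,
      mul_pos hN0 (sub_pos.2 hb)]
  obtain ⟨m, hm, hweak⟩ := exists_weakConvSeq_of_antitone_dist hH hbdd
    (M := {y | f y = v}) hanti fun φ hφ c hc =>
      le_antisymm
        (hc.le_of_eventually_le hH hconv hlsc (hbdd.subset (Set.range_comp_subset_range φ x))
          fun b hb => hφ.tendsto_atTop.eventually (hvalue b hb))
        (hv ▸ hm₀ c)
  exact ⟨m, fun y => (hm.trans hv.symm).le.trans (hm₀ y), hbdd, hweak⟩
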